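/- Let n ≥ 4 be an integer and k a PAC field of any characteristic. Then every separable field extension E/k of degree n can be realized by a polynomial of the form Y^n + aY^3 + bY^2 + cY + d: there exist a, b, c, d ∈ k such that Y^n + aY^3 + bY^2 + cY + d is irreducible in k[Y] and E is generated over k by one of its roots. -/

import Mathlib

/-!
The idea is to find the polynomial in a pencil `p - tX`, where
`p = Xⁿ + aX³ + bX² + cX + d = (X - 1)² g` with `g` separable, `g(1) ≠ 0` and `d ≠ 0`. Every
member of the pencil has the required shape.

Let `F` be an algebraic closure of `k`. Over `F(t)` the Galois group of `p - tX` is the full symmetric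
group (`pencil_symmetric`): stabilizers of roots are transitive on the remaining roots by an Eisenstein
argument (`pencil_stabilizer_transitive`), and the double root of `p` at `t = 0` produces a
transposition by Hensel's lemma over `F⟦t⟧` (`pencil_swap`). Both arguments work in every
characteristic.

Index the roots `yᵢ` of `p - tX` by the `n` embeddings `i : E → F` over `k`, and form the resolvent
`R(t, Z) = ∏_π (Z - ∑ᵢ i(w) y_{π i})`, where `w` is an element of `E` and `π` runs over all
permutations. The resolvent is symmetric in the roots and invariant under the Galois group of `k`, so
its coefficients are in `k[t]` (`exists_resolvent`). For a suitable `w` its roots are distinct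
(`exists_separating_element`), and they are conjugate over `F(t)`, so `R` is irreducible over `F`
(`exists_geometric_resolvent`).

The PAC property yields `t` and `z` in `k` with `R(t, z) = 0` and `R(t, Z)` separable
(`IsPAC.exists_zero`, `exists_discriminant`). The zero `z` amounts to an indexing of the roots of the
specialized polynomial by the embeddings of `E` that is compatible with the Galois action, which
means that the polynomial has a root generating `E` (`exists_generator`).
-/

open Polynomial

/-- A field `k` is PAC (pseudo algebraically closed): every polynomial in two
variables over `k` that remains irreducible over an algebraic closure of `k`
has infinitely many zeros in `k × k`. -/
def IsPAC (k : Type*) [Field k] : Prop :=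
  ∀ f : MvPolynomial (Fin 2) k,
    Irreducible (MvPolynomial.map (algebraMap k (AlgebraicClosure k)) f) →
    {x : k × k | MvPolynomial.eval ![x.1, x.2] f = 0}.Infinite

/-! ### Roots of a pencil `p - tX` -/

lemma pencil_root_ne_zero {F Ω : Type*} [Field F] [Field Ω] [Algebra F Ω]
    {p : F[X]} (hp0 : p.coeff 0 ≠ 0) {t y : Ω} (hy : aeval y p = t * y) : y ≠ 0 := by
  rintro rfl
  rw [mul_zero, aeval_def, eval₂_at_zero] at hy
  exact hp0 ((map_eq_zero _).1 hy)

lemma pencil_root_transcendental {F Ω : Type*} [Field F] [Field Ω] [Algebra F Ω]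
    {p : F[X]} (hp0 : p.coeff 0 ≠ 0) {t y : Ω} (ht : Transcendental F t)
    (hy : aeval y p = t * y) : Transcendental F y := by
  intro halg
  have hy0 := pencil_root_ne_zero hp0 hy
  apply ht
  have : t = aeval y p * y⁻¹ := by rw [hy]; field_simp
  rw [this]
  have hint : IsIntegral F y := halg.isIntegral
  have h1 : IsIntegral F (aeval y p) := by
    exact adjoin_le_integralClosure hint (aeval_mem_adjoin_singleton F y)
  exact h1.isAlgebraic.mul halg.inv

/-- A multiple root `y` of `p - tX` would satisfy `p(y) = p'(y) y`; since `y` is transcendental over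
`F` this forces `p = X p'`, contradicting `p(0) ≠ 0`. No assumption on the characteristic is needed. -/
lemma pencil_root_simple {F Ω : Type*} [Field F] [Field Ω] [Algebra F Ω]
    {p : F[X]} (hp0 : p.coeff 0 ≠ 0) {t y : Ω} (ht : Transcendental F t)
    (hy : aeval y p = t * y) : aeval y (derivative p) ≠ t := by
  intro h
  have htr := pencil_root_transcendental hp0 ht hy
  have h2 : p = derivative p * X := by
    apply transcendental_iff_injective.1 htr
    simp [h, hy]
  apply hp0
  rw [h2]; simp

lemma pencil_separable {F Ω : Type*} [Field F] [Field Ω] [Algebra F Ω] [IsAlgClosed Ω]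
    {p : F[X]} (hp0 : p.coeff 0 ≠ 0) {t : Ω} (ht : Transcendental F t) :
    (p.map (algebraMap F Ω) - C t * X).Separable := by
  rw [separable_def, isCoprime_iff_aeval_ne_zero_of_isAlgClosed Ω Ω]
  intro y
  by_contra! h
  obtain ⟨h1, h2⟩ := h
  refine pencil_root_simple hp0 ht (y := y) ?_ ?_
  · simpa [sub_eq_zero] using h1
  · simpa [sub_eq_zero, derivative_map] using h2

/-- Two distinct roots `b ≠ y` of `p - tX` satisfy `(p(b)/b - p(y)/y)/(b - y) = 0`. Written with
`p = X q + p(0)` and `q(b) - q(y) = (b - y) D(y, b)`, this says `p(0) = y b D(y, b)`. Multiplying by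
a power of `1/b` gives an equation for `1/b` over `F[y]` whose leading coefficient is the unit
`p(0)`, whose other coefficients are divisible by `y`, and whose constant term is `-y`: an Eisenstein
polynomial at `y`. -/
lemma pencil_eisenstein {F : Type*} [Field F] {p : F[X]} (hp : p.Monic) (hp0 : p.coeff 0 ≠ 0)
    (hdeg : 3 ≤ p.natDegree) :
    ∃ T : F[X][X], T.IsPrimitive ∧ Irreducible T ∧
      ∀ (Ω : Type _) [Field Ω] [Algebra F Ω] (t y b : Ω), aeval y p = t * y →
        aeval b p = t * b → b ≠ y →
        eval₂ (aeval (R := F) y).toRingHom b⁻¹ T = 0 := by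
  obtain ⟨D, hD⟩ : (X - C (X : F[X])) ∣ (divX p).map C - C (divX p) := by
    rw [dvd_iff_isRoot]
    simp [eval_map, eval₂_C_X]
  set m := natDegree (divX p) with hm
  have hmdeg : m + 1 = p.natDegree := by
    rw [hm, natDegree_divX_eq_natDegree_tsub_one]; omega
  have hdivXmonic : (divX p).Monic := by
    rw [Monic, leadingCoeff, coeff_divX, ← hm, hmdeg]; exact hp
  have hprod : ((divX p).map C - C (divX p)).Monic := by
    apply (hdivXmonic.map C).sub_of_left
    rw [degree_map_eq_of_injective C_injective]
    refine lt_of_le_of_lt degree_C_le ?_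
    rw [← natDegree_pos_iff_degree_pos]; omega
  have hDm : D.Monic := by
    rw [hD] at hprod
    exact (monic_X_sub_C _).of_mul_monic_left hprod
  have hDdeg : D.natDegree + 1 = m := by
    have h1 : ((divX p).map C - C (divX p)).natDegree = m := by
      rw [natDegree_sub_C, natDegree_map_eq_of_injective C_injective]
    rw [hD, (monic_X_sub_C _).natDegree_mul hDm, natDegree_X_sub_C] at h1
    omega
  set T : F[X][X] := C (C (p.coeff 0)) * X ^ m - C X * D.reverse with hT
  have hcoeffm : T.coeff m = C (p.coeff 0) := by
    rw [hT, coeff_sub, coeff_C_mul, coeff_C_mul, coeff_X_pow, if_pos rfl,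
      coeff_eq_zero_of_natDegree_lt (lt_of_le_of_lt (reverse_natDegree_le D) (by omega))]
    simp
  have hTdeg : T.natDegree = m := by
    apply natDegree_eq_of_le_of_coeff_ne_zero
    · refine (natDegree_sub_le _ _).trans (max_le (natDegree_C_mul_X_pow_le _ _) ?_)
      refine (natDegree_C_mul_le _ _).trans ((reverse_natDegree_le D).trans (by omega))
    · rw [hcoeffm]; simpa using hp0
  have hlead : T.leadingCoeff = C (p.coeff 0) := by rw [leadingCoeff, hTdeg, hcoeffm]
  have hprim : T.IsPrimitive := by
    intro r hr
    rw [C_dvd_iff_dvd_coeff] at hr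
    have := hr m
    rw [hcoeffm] at this
    exact isUnit_of_dvd_unit this (isUnit_C.2 (isUnit_iff_ne_zero.2 hp0))
  refine ⟨T, hprim, ?_, ?_⟩
  · refine irreducible_of_eisenstein_criterion (P := Ideal.span {(X : F[X])}) ?_ ?_ ?_ ?_ ?_ hprim
    · rw [Ideal.span_singleton_prime X_ne_zero]; exact prime_X
    · rw [hlead, Ideal.mem_span_singleton, X_dvd_iff]; simpa using hp0
    · intro j hj
      rw [degree_eq_natDegree hprim.ne_zero, hTdeg, Nat.cast_lt] at hj
      rw [hT, coeff_sub, coeff_C_mul, coeff_C_mul, coeff_X_pow, if_neg (by omega),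
        Ideal.mem_span_singleton]
      simp
    · rw [← natDegree_pos_iff_degree_pos]; omega
    · rw [hT, coeff_sub, coeff_C_mul, coeff_C_mul, coeff_X_pow, if_neg (by omega),
        coeff_zero_reverse, hDm.leadingCoeff, Ideal.span_singleton_pow, Ideal.mem_span_singleton,
        mul_zero, mul_one, zero_sub, dvd_neg, X_pow_dvd_iff]
      intro h
      simpa using h 1 (by norm_num)
  · intro Ω _ _ t y b hy hb hby
    have hb0 := pencil_root_ne_zero hp0 hb
    have hy0 := pencil_root_ne_zero hp0 hy
    let _ := invertibleOfNonzero hb0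
    set φ : F[X] →+* Ω := (aeval (R := F) y).toRingHom with hφ
    have h1 := eval₂_reverse_mul_pow φ b D
    rw [invOf_eq_inv] at h1
    have h2 := congrArg (eval₂ φ b) hD
    have hφC : φ.comp C = algebraMap F Ω := by ext; simp [hφ]
    have hpy : aeval y p = aeval y (divX p) * y + algebraMap F Ω (p.coeff 0) := by
      conv_lhs => rw [← divX_mul_X_add p]
      simp
    have hpb : aeval b p = aeval b (divX p) * b + algebraMap F Ω (p.coeff 0) := by
      conv_lhs => rw [← divX_mul_X_add p]
      simp
    rw [eval₂_sub, eval₂_mul, eval₂_sub, eval₂_X, eval₂_C, eval₂_C, eval₂_map, hφC,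
      ← aeval_def] at h2
    have hφX : φ X = y := by simp [hφ]
    have hφd : φ (divX p) = aeval y (divX p) := rfl
    rw [hφX, hφd] at h2
    have key : algebraMap F Ω (p.coeff 0) = y * b * eval₂ φ b D := by
      have hsub : b - y ≠ 0 := sub_ne_zero.2 hby
      apply mul_left_cancel₀ hsub
      rw [hpy] at hy; rw [hpb] at hb
      linear_combination b * hy - y * hb + y * b * h2
    rw [hT, eval₂_sub, eval₂_mul, eval₂_mul, eval₂_C, eval₂_C, eval₂_X_pow, hφX]
    have hφCC : φ (C (p.coeff 0)) = algebraMap F Ω (p.coeff 0) := by simp [hφ]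
    rw [hφCC, key, ← h1, ← hDdeg]
    have hbb : b * b ^ D.natDegree * b⁻¹ ^ (D.natDegree + 1) = 1 := by
      rw [← pow_succ', ← mul_pow, mul_inv_cancel₀ hb0, one_pow]
    linear_combination (y * eval₂ φ b⁻¹ D.reverse) * hbb

lemma transcendental_algebraMap_X {F Ω : Type*} [Field F] [CommRing Ω] [Algebra F[X] Ω]
    [Algebra F Ω] [IsScalarTower F F[X] Ω] (hinj : Function.Injective (algebraMap F[X] Ω)) :
    Transcendental F (algebraMap F[X] Ω X) := by
  have haev : ∀ f : F[X], aeval (algebraMap F[X] Ω X) f = algebraMap F[X] Ω f := by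
    intro f
    rw [aeval_algebraMap_apply, aeval_X_left_apply]
  rw [transcendental_iff_injective]
  intro f g hfg
  rw [haev, haev] at hfg
  exact hinj hfg

lemma exists_algEquiv_of_irreducible {L Ω : Type*} [Field L] [Field Ω] [Algebra L Ω] [Normal L Ω]
    {f : L[X]} (hf : Irreducible f) {a b : Ω} (ha : aeval a f = 0) (hb : aeval b f = 0) :
    ∃ σ : Ω ≃ₐ[L] Ω, σ a = b := by
  rw [← isConjRoot_iff_exists_algEquiv, IsConjRoot,
    ← minpoly.eq_of_irreducible hf ha, ← minpoly.eq_of_irreducible hf hb]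

/-- The stabilizer of a root `y` acts transitively on the other roots of `p - tX` over `F(t)`: since
`t = p(y)/y`, the field `F(y)` contains `F(t)`, and over it the inverses of the other roots are all
roots of one irreducible polynomial. -/
lemma pencil_stabilizer_transitive {F K Ω : Type*} [Field F] [Field K] [Field Ω]
    [Algebra F[X] K] [IsFractionRing F[X] K] [Algebra F[X] Ω] [Algebra K Ω]
    [IsScalarTower F[X] K Ω] [IsAlgClosure K Ω] [Algebra F Ω] [IsScalarTower F F[X] Ω]
    {p : F[X]} (hp : p.Monic) (hp0 : p.coeff 0 ≠ 0) (hdeg : 3 ≤ p.natDegree)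
    {y b c : Ω} (hy : aeval y p = algebraMap F[X] Ω X * y)
    (hb : aeval b p = algebraMap F[X] Ω X * b) (hc : aeval c p = algebraMap F[X] Ω X * c)
    (hby : b ≠ y) (hcy : c ≠ y) :
    ∃ σ : Ω ≃ₐ[K] Ω, σ y = y ∧ σ b = c := by
  have hinj : Function.Injective (algebraMap F[X] Ω) := by
    rw [IsScalarTower.algebraMap_eq F[X] K Ω]
    exact (algebraMap K Ω).injective.comp (IsFractionRing.injective F[X] K)
  have ht : Transcendental F (algebraMap F[X] Ω X) := transcendental_algebraMap_X hinj
  have htr := pencil_root_transcendental hp0 ht hy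
  have hy0 := pencil_root_ne_zero hp0 hy
  obtain ⟨T, hTprim, hTirr, hT⟩ := pencil_eisenstein hp hp0 hdeg
  let φ : F[X] →+* Ω := (aeval (R := F) y).toRingHom
  have hφ : Function.Injective φ := transcendental_iff_injective.1 htr
  let L := FractionRing F[X]
  let j : L →+* Ω := IsFractionRing.lift hφ
  have hj : ∀ f : F[X], j (algebraMap F[X] L f) = φ f := fun f => IsFractionRing.lift_algebraMap hφ f
  let _ : Algebra L Ω := j.toAlgebra
  -- `L` is a copy of `F(y)`, embedded in `Ω` by `j`; the parameter `t` is the image of `u`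
  let u : L := algebraMap F[X] L p / algebraMap F[X] L X
  have hu : j u = algebraMap F[X] Ω X := by
    simp only [u, map_div₀, hj]
    have h1 : φ p = algebraMap F[X] Ω X * y := hy
    have h2 : φ X = y := aeval_X y
    rw [h1, h2]; field_simp
  let ψ : F[X] →+* L := (aeval (R := F) u).toRingHom
  have hψ : j.comp ψ = algebraMap F[X] Ω := by
    refine Polynomial.ringHom_ext (fun a => ?_) ?_
    · have h1 : ψ (C a) = algebraMap F[X] L (C a) := by
        simp only [ψ, AlgHom.toRingHom_eq_coe, RingHom.coe_coe, aeval_C]; rfl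
      rw [RingHom.comp_apply, h1, hj]
      have h2 : φ (C a) = algebraMap F Ω a := aeval_C y a
      rw [h2, IsScalarTower.algebraMap_apply F F[X] Ω]; rfl
    · have h1 : ψ X = u := aeval_X u
      rw [RingHom.comp_apply, h1, hu]
  have hψinj : Function.Injective ψ := by
    apply Function.Injective.of_comp (f := j)
    rw [← RingHom.coe_comp, hψ]; exact hinj
  have hΩc : IsAlgClosed Ω := IsAlgClosure.isAlgClosed K
  have hKalg : Algebra.IsAlgebraic K Ω := IsAlgClosure.isAlgebraic
  have hFalg : Algebra.IsAlgebraic F[X] Ω :=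
    (IsFractionRing.comap_isAlgebraic_iff (A := F[X]) (K := K) (C := Ω)).2 hKalg
  have hLalg : Algebra.IsAlgebraic L Ω := by
    refine ⟨fun x => ?_⟩
    obtain ⟨f, hf0, hf⟩ := hFalg.isAlgebraic x
    refine ⟨f.map ψ, (Polynomial.map_ne_zero_iff hψinj).2 hf0, ?_⟩
    rw [aeval_def, eval₂_map]
    have : (algebraMap L Ω).comp ψ = algebraMap F[X] Ω := hψ
    rw [this]; exact hf
  have hLcl : IsAlgClosure L Ω := ⟨hΩc, hLalg⟩
  have hn : Normal L Ω := normal_iff.2 fun x => ⟨(hLalg.isAlgebraic x).isIntegral, IsAlgClosed.splits _⟩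
  have hirr : Irreducible (T.map (algebraMap F[X] L)) :=
    (hTprim.irreducible_iff_irreducible_map_fraction_map).1 hTirr
  have hcomp : (algebraMap L Ω).comp (algebraMap F[X] L) = φ := RingHom.ext hj
  obtain ⟨σ, hσ⟩ := exists_algEquiv_of_irreducible (Ω := Ω) hirr (a := b⁻¹) (b := c⁻¹)
    (by rw [aeval_def, eval₂_map, hcomp]; exact hT Ω _ y b hy hb hby)
    (by rw [aeval_def, eval₂_map, hcomp]; exact hT Ω _ y c hy hc hcy)
  have hfix : ∀ f : F[X], σ (algebraMap F[X] Ω f) = algebraMap F[X] Ω f := by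
    intro f
    rw [← hψ]
    exact σ.commutes (ψ f)
  refine ⟨AlgEquiv.ofRingEquiv (f := σ.toRingEquiv) ?_, ?_, ?_⟩
  · intro x
    have : (σ.toRingEquiv.toRingHom).comp (algebraMap K Ω) = algebraMap K Ω := by
      apply IsLocalization.ringHom_ext (nonZeroDivisors F[X])
      refine RingHom.ext fun f => ?_
      simpa [← IsScalarTower.algebraMap_apply] using hfix f
    exact RingHom.congr_fun this x
  · have : y = algebraMap L Ω (algebraMap F[X] L X) := by
      change y = j _
      rw [hj]; exact (aeval_X y).symm
    change σ y = y
    conv_lhs => rw [this]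
    rw [σ.commutes, ← this]
  · change σ b = c
    rw [map_inv₀] at hσ
    exact inv_injective hσ

/-! ### A transposition from a double root -/

lemma constantCoeff_aeval {F : Type*} [Field F] (q : F[X]) (s : PowerSeries F) :
    PowerSeries.constantCoeff (aeval s q) = q.eval (PowerSeries.constantCoeff s) := by
  rw [aeval_def, hom_eval₂, ← eval₂_id]
  congr 1

lemma derivative_eval_ne_zero_of_double {F : Type*} [Field F] {p g : F[X]}
    (hpg : p = (X - 1) ^ 2 * g) (hg : g.Separable) {η : F} (hη : g.eval η = 0) (hη1 : η ≠ 1) :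
    (derivative p).eval η ≠ 0 := by
  have h1 : (derivative p).eval η = (η - 1) ^ 2 * (derivative g).eval η := by
    rw [hpg]; simp [hη]
  rw [h1]
  refine mul_ne_zero (pow_ne_zero _ (sub_ne_zero.2 hη1)) ?_
  exact hg.eval₂_derivative_ne_zero (RingHom.id F) (by simpa using hη)

/-- Hensel's lemma: each root of `g`, a simple root of `p = (X - 1)² g`, lifts to a root of `p - tX`
in `F⟦t⟧`. -/
lemma pencil_powerSeries_lift {F : Type*} [Field F] {p g : F[X]} (hp : p.Monic)
    (hdeg : 3 ≤ p.natDegree) (hpg : p = (X - 1) ^ 2 * g) (hg : g.Separable)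
    (hg1 : g.eval 1 ≠ 0) {η : F} (hη : g.eval η = 0) :
    ∃ s : PowerSeries F, aeval s p = PowerSeries.X * s ∧ PowerSeries.constantCoeff s = η := by
  let f : (PowerSeries F)[X] := p.map (algebraMap F (PowerSeries F)) - C PowerSeries.X * X
  have hf : f.Monic := by
    refine (hp.map _).sub_of_left ?_
    refine lt_of_le_of_lt (degree_C_mul_X_le _) ?_
    rw [degree_map, degree_eq_natDegree hp.ne_zero]
    exact_mod_cast (by omega : 1 < p.natDegree)
  have hpη : p.eval η = 0 := by simp [hpg, hη]
  have hp' := derivative_eval_ne_zero_of_double hpg hg hη (by rintro rfl; exact hg1 hη)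
  have hmem : ∀ s : PowerSeries F, s ∈ Ideal.span {(PowerSeries.X : PowerSeries F)} ↔
      PowerSeries.constantCoeff s = 0 := by
    intro s
    rw [Ideal.mem_span_singleton, PowerSeries.X_dvd_iff]
  obtain ⟨s, hs, hsη⟩ := HenselianRing.is_henselian
    (I := Ideal.span {(PowerSeries.X : PowerSeries F)}) f hf (PowerSeries.C η)
    (by
      rw [hmem]
      simp only [f, eval_sub, eval_map_algebraMap, eval_mul, eval_C, eval_X, map_sub,
        constantCoeff_aeval, map_mul]
      simp [hpη])
    (by
      apply IsUnit.map
      rw [PowerSeries.isUnit_iff_constantCoeff, isUnit_iff_ne_zero]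
      simp only [f, derivative_map, eval_sub, eval_map_algebraMap, map_sub, constantCoeff_aeval]
      simpa using hp')
  refine ⟨s, ?_, ?_⟩
  · simpa only [f, IsRoot, eval_sub, eval_map_algebraMap, eval_mul, eval_C, eval_X,
      sub_eq_zero] using hs
  · rw [hmem] at hsη
    simpa [sub_eq_zero] using hsη

/-- No root of `p - tX` in `F⟦t⟧` reduces to the double root `1`: the left side of
`(s - 1)² g(s) = t s` would be divisible by `t²`, whereas the right side has order one. -/
lemma pencil_powerSeries_residue {F : Type*} [Field F] {p g : F[X]}
    (hpg : p = (X - 1) ^ 2 * g) {s : PowerSeries F} (hs : aeval s p = PowerSeries.X * s) :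
    PowerSeries.constantCoeff s ≠ 1 ∧ g.eval (PowerSeries.constantCoeff s) = 0 := by
  have hne : PowerSeries.constantCoeff s ≠ 1 := by
    intro h
    obtain ⟨r, hr⟩ : PowerSeries.X ∣ s - 1 := by
      rw [PowerSeries.X_dvd_iff]; simp [h]
    have h1 : aeval s p = (s - 1) ^ 2 * aeval s g := by rw [hpg]; simp
    rw [h1, hr, mul_pow, pow_two, mul_assoc, mul_assoc] at hs
    have h2 := mul_left_cancel₀ PowerSeries.X_ne_zero hs
    rw [← h2] at h
    simp at h
  refine ⟨hne, ?_⟩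
  have hpη : p.eval (PowerSeries.constantCoeff s) = 0 := by
    rw [← constantCoeff_aeval, hs]; simp
  rw [hpg] at hpη
  simpa [sub_eq_zero, hne] using hpη

lemma pencil_powerSeries_unique {F : Type*} [Field F] {p g : F[X]}
    (hpg : p = (X - 1) ^ 2 * g) (hg : g.Separable)
    {s s' : PowerSeries F} (hs : aeval s p = PowerSeries.X * s)
    (hs' : aeval s' p = PowerSeries.X * s')
    (hss : PowerSeries.constantCoeff s = PowerSeries.constantCoeff s') : s = s' := by
  obtain ⟨hη1, hη⟩ := pencil_powerSeries_residue hpg hs'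
  have hp' := derivative_eval_ne_zero_of_double hpg hg hη hη1
  let f : (PowerSeries F)[X] := p.map (algebraMap F (PowerSeries F)) - C PowerSeries.X * X
  obtain ⟨e, he⟩ := binomExpansion f s' (s - s')
  rw [add_sub_cancel] at he
  have hf : ∀ r, f.eval r = aeval r p - PowerSeries.X * r := by
    intro r
    simp only [f, eval_sub, eval_map_algebraMap, eval_mul, eval_C, eval_X]
  rw [hf s, hf s', hs, hs', sub_self, sub_self] at he
  have h3 : (s - s') * ((derivative f).eval s' + e * (s - s')) = 0 := by
    linear_combination -he
  rcases mul_eq_zero.1 h3 with h | h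
  · exact sub_eq_zero.1 h
  · exfalso
    have := congrArg PowerSeries.constantCoeff h
    simp only [f, derivative_map, eval_sub, eval_map_algebraMap, map_sub, map_add,
      constantCoeff_aeval, map_mul, hss] at this
    apply hp'
    simpa using this

/-- Over `F((t))` all roots of `p - tX` but two are rational, namely the Hensel lifts of the roots of
`g`. The remaining two, which reduce to `1`, are not rational, hence conjugate. -/
lemma pencil_local_swap {F : Type*} [Field F] [IsAlgClosed F] {p g : F[X]} (hp : p.Monic)
    (hp0 : p.coeff 0 ≠ 0)
    (hdeg : 3 ≤ p.natDegree) (hpg : p = (X - 1) ^ 2 * g) (hg : g.Separable)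
    (hg1 : g.eval 1 ≠ 0) {M Ω : Type*} [Field M] [Algebra (PowerSeries F) M]
    [IsFractionRing (PowerSeries F) M] [Field Ω] [Algebra M Ω] [IsAlgClosure M Ω]
    [Algebra (PowerSeries F) Ω] [IsScalarTower (PowerSeries F) M Ω]
    [Algebra F Ω] [IsScalarTower F (PowerSeries F) Ω] {t : Ω}
    (ht : t = algebraMap (PowerSeries F) Ω PowerSeries.X) (htr : Transcendental F t) :
    ∃ (τ : Ω ≃ₐ[M] Ω) (a b : Ω), aeval a p = t * a ∧ aeval b p = t * b ∧ a ≠ b ∧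
      τ a = b ∧ ∀ c, aeval c p = t * c → c ≠ a → c ≠ b → τ c = c := by
  classical
  have hΩc : IsAlgClosed Ω := IsAlgClosure.isAlgClosed M
  have hMalg : Algebra.IsAlgebraic M Ω := IsAlgClosure.isAlgebraic
  have hn : Normal M Ω :=
    normal_iff.2 fun x => ⟨(hMalg.isAlgebraic x).isIntegral, IsAlgClosed.splits _⟩
  set P : (Polynomial Ω) := p.map (algebraMap F Ω) - C t * X with hP
  have hPsep : P.Separable := pencil_separable hp0 htr
  have hlow : degree (C t * X) < degree (p.map (algebraMap F Ω)) := by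
    refine lt_of_le_of_lt (degree_C_mul_X_le _) ?_
    rw [degree_map, degree_eq_natDegree hp.ne_zero]
    exact_mod_cast (by omega : 1 < p.natDegree)
  have hPm : P.Monic := (hp.map _).sub_of_left hlow
  have hPdeg : P.natDegree = p.natDegree := by
    rw [← natDegree_map (f := algebraMap F Ω) (p := p)]
    exact natDegree_eq_of_degree_eq (degree_sub_eq_left_of_degree_lt hlow)
  have hroot : ∀ c, c ∈ P.roots.toFinset ↔ aeval c p = t * c := by
    intro c
    rw [Multiset.mem_toFinset, mem_roots hPm.ne_zero, IsRoot]
    simp [hP, sub_eq_zero]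
  have hinj : Function.Injective (algebraMap (PowerSeries F) Ω) := by
    rw [IsScalarTower.algebraMap_eq (PowerSeries F) M Ω]
    exact (algebraMap M Ω).injective.comp (IsFractionRing.injective (PowerSeries F) M)
  have haev : ∀ s : PowerSeries F, aeval (algebraMap (PowerSeries F) Ω s) p =
      t * algebraMap (PowerSeries F) Ω s ↔ aeval s p = PowerSeries.X * s := by
    intro s
    rw [aeval_algebraMap_apply, ht, ← map_mul, hinj.eq_iff]
  have hcard : P.roots.toFinset.card = p.natDegree := by
    rw [Multiset.toFinset_card_of_nodup (nodup_roots hPsep), ← hPdeg]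
    exact (splits_iff_card_roots.1 (IsAlgClosed.splits P))
  have hg0 : g ≠ 0 := hg.ne_zero
  have hgcard : g.roots.toFinset.card + 2 = p.natDegree := by
    rw [Multiset.toFinset_card_of_nodup (nodup_roots hg),
      splits_iff_card_roots.1 (IsAlgClosed.splits g), hpg, natDegree_mul _ hg0, natDegree_pow]
    · rw [← C_1, natDegree_X_sub_C]; omega
    · rw [← C_1]; exact pow_ne_zero _ (X_sub_C_ne_zero _)
  have hlift : ∀ η : F, ∃ s : PowerSeries F, g.eval η = 0 →
      aeval s p = PowerSeries.X * s ∧ PowerSeries.constantCoeff s = η := by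
    intro η
    by_cases h : g.eval η = 0
    · obtain ⟨s, hs⟩ := pencil_powerSeries_lift hp hdeg hpg hg hg1 h
      exact ⟨s, fun _ => hs⟩
    · exact ⟨0, fun h' => absurd h' h⟩
  choose s hs using hlift
  have hgmem : ∀ η ∈ g.roots.toFinset, g.eval η = 0 := by
    intro η h
    rw [Multiset.mem_toFinset, mem_roots hg0] at h
    exact h
  set S0 : Finset Ω := g.roots.toFinset.image (fun η => algebraMap (PowerSeries F) Ω (s η)) with hS0
  have hS0card : S0.card = g.roots.toFinset.card := by
    apply Finset.card_image_of_injOn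
    intro η hη η' hη' h
    rw [← (hs η (hgmem η hη)).2, ← (hs η' (hgmem η' hη')).2, hinj h]
  have hS0sub : S0 ⊆ P.roots.toFinset := by
    intro c hc
    obtain ⟨η, hη, rfl⟩ := Finset.mem_image.1 hc
    rw [hroot, haev]
    exact (hs η (hgmem η hη)).1
  -- a root in the base field is one of the lifted ones
  have hbase : ∀ c, aeval c p = t * c → c ∈ (⊥ : IntermediateField M Ω) → c ∈ S0 := by
    intro c hc hcM
    obtain ⟨m, rfl⟩ := IntermediateField.mem_bot.1 hcM
    have hint : IsIntegral (PowerSeries F) m := by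
      refine ⟨p.map (algebraMap F (PowerSeries F)) - C PowerSeries.X * X, ?_, ?_⟩
      · refine (hp.map _).sub_of_left ?_
        refine lt_of_le_of_lt (degree_C_mul_X_le _) ?_
        rw [degree_map, degree_eq_natDegree hp.ne_zero]
        exact_mod_cast (by omega : 1 < p.natDegree)
      · apply (algebraMap M Ω).injective
        rw [hom_eval₂, ← IsScalarTower.algebraMap_eq, map_zero, eval₂_sub, eval₂_map,
          ← IsScalarTower.algebraMap_eq, eval₂_mul, eval₂_C, eval₂_X, ← ht, ← aeval_def, hc,
          sub_self]
    obtain ⟨r, rfl⟩ := IsIntegrallyClosed.isIntegral_iff.1 hint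
    rw [← IsScalarTower.algebraMap_apply] at hc ⊢
    rw [haev] at hc
    obtain ⟨-, hη⟩ := pencil_powerSeries_residue hpg hc
    refine Finset.mem_image.2 ⟨PowerSeries.constantCoeff r, ?_, ?_⟩
    · rw [Multiset.mem_toFinset, mem_roots hg0]; exact hη
    · rw [pencil_powerSeries_unique hpg hg hc (hs _ hη).1 (hs _ hη).2.symm]
      congr 2
      exact (hs _ hη).2
  have hS0fix : ∀ c ∈ S0, c ∈ (⊥ : IntermediateField M Ω) := by
    intro c hc
    obtain ⟨η, hη, rfl⟩ := Finset.mem_image.1 hc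
    rw [IsScalarTower.algebraMap_apply (PowerSeries F) M Ω]
    exact IntermediateField.mem_bot.2 ⟨_, rfl⟩
  have htwo : (P.roots.toFinset \ S0).card = 2 := by
    rw [Finset.card_sdiff_of_subset hS0sub]; omega
  obtain ⟨a, b, hab, hSab⟩ := Finset.card_eq_two.1 htwo
  have hmem : ∀ c, (aeval c p = t * c ∧ c ∉ S0) ↔ (c = a ∨ c = b) := by
    intro c
    rw [← hroot, ← Finset.mem_sdiff, hSab]; simp
  have ha := (hmem a).2 (Or.inl rfl)
  have hb := (hmem b).2 (Or.inr rfl)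
  have hanot : a ∉ (⊥ : IntermediateField M Ω) := fun h => ha.2 (hbase a ha.1 h)
  have htM : t = algebraMap M Ω (algebraMap (PowerSeries F) M PowerSeries.X) := by
    rw [ht, ← IsScalarTower.algebraMap_apply]
  have htau_t : ∀ τ : Ω ≃ₐ[M] Ω, τ t = t := fun τ => by rw [htM, τ.commutes]
  have htau_F : ∀ (τ : Ω ≃ₐ[M] Ω) (c : F), τ (algebraMap F Ω c) = algebraMap F Ω c := by
    intro τ c
    rw [IsScalarTower.algebraMap_apply F (PowerSeries F) Ω,
      IsScalarTower.algebraMap_apply (PowerSeries F) M Ω, τ.commutes]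
  have htau_root : ∀ (τ : Ω ≃ₐ[M] Ω) c, aeval c p = t * c → aeval (τ c) p = t * τ c := by
    intro τ c hc
    have h1 : (τ : Ω →+* Ω).comp (algebraMap F Ω) = algebraMap F Ω :=
      RingHom.ext (htau_F τ)
    have h2 := congrArg (τ : Ω →+* Ω) hc
    rw [aeval_def, hom_eval₂, h1, ← aeval_def, map_mul] at h2
    simpa [htau_t] using h2
  have hasep : IsSeparable M a := by
    let PM : M[X] := (p.map (algebraMap F (PowerSeries F)) - C PowerSeries.X * X).map
      (algebraMap (PowerSeries F) M)
    have hPM : PM.map (algebraMap M Ω) = P := by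
      simp only [PM, Polynomial.map_sub, Polynomial.map_map, Polynomial.map_mul, map_C, map_X]
      rw [← RingHom.comp_assoc, ← IsScalarTower.algebraMap_eq (PowerSeries F) M Ω,
        ← IsScalarTower.algebraMap_eq F (PowerSeries F) Ω, ← htM]
    have hPMsep : PM.Separable := (separable_map (algebraMap M Ω)).1 (hPM ▸ hPsep)
    refine hPMsep.of_dvd (minpoly.dvd M a ?_)
    rw [← eval_map_algebraMap, hPM]
    simp [hP, ha.1]
  obtain ⟨b', hne, hconj⟩ :=
    (notMem_iff_exists_ne_and_isConjRoot hasep (IsAlgClosed.splits _)).1 hanot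
  obtain ⟨τ, hτ⟩ := isConjRoot_iff_exists_algEquiv.1 hconj.symm
  have hb' : b' = b := by
    have h1 : aeval b' p = t * b' := hτ ▸ htau_root τ a ha.1
    have h2 : b' ∉ S0 := by
      intro h
      obtain ⟨m, hm⟩ := IntermediateField.mem_bot.1 (hS0fix b' h)
      apply hanot
      have : a = b' := by
        apply τ.injective
        rw [hτ, ← hm, τ.commutes]
      exact this ▸ hS0fix b' h
    rcases (hmem b').1 ⟨h1, h2⟩ with h | h
    · exact absurd h.symm hne
    · exact h
  refine ⟨τ, a, b, ha.1, hb.1, hab, by rw [hτ, hb'], ?_⟩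
  intro c hc hca hcb
  have hcS : c ∈ S0 := by
    by_contra h
    rcases (hmem c).1 ⟨hc, h⟩ with h | h
    · exact hca h
    · exact hcb h
  obtain ⟨m, hm⟩ := IntermediateField.mem_bot.1 (hS0fix c hcS)
  rw [← hm, τ.commutes]

/-- The automorphism of `pencil_local_swap` restricted to the algebraic closure of `F(t)` inside that
of `F((t))`. -/
lemma pencil_swap {F K Ω : Type*} [Field F] [IsAlgClosed F] [Field K] [Field Ω]
    [Algebra F[X] K] [IsFractionRing F[X] K] [Algebra F[X] Ω] [Algebra K Ω]
    [IsScalarTower F[X] K Ω] [IsAlgClosure K Ω] [Algebra F Ω] [IsScalarTower F F[X] Ω]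
    {p g : F[X]} (hp : p.Monic) (hp0 : p.coeff 0 ≠ 0) (hdeg : 3 ≤ p.natDegree)
    (hpg : p = (X - 1) ^ 2 * g) (hg : g.Separable) (hg1 : g.eval 1 ≠ 0)
    {t : Ω} (ht : t = algebraMap F[X] Ω X) :
    ∃ (τ : Ω ≃ₐ[K] Ω) (a b : Ω), aeval a p = t * a ∧ aeval b p = t * b ∧ a ≠ b ∧
      τ a = b ∧ ∀ c, aeval c p = t * c → c ≠ a → c ≠ b → τ c = c := by
  have hΩc : IsAlgClosed Ω := IsAlgClosure.isAlgClosed K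
  have hKalg : Algebra.IsAlgebraic K Ω := IsAlgClosure.isAlgebraic
  have hn : Normal K Ω :=
    normal_iff.2 fun x => ⟨(hKalg.isAlgebraic x).isIntegral, IsAlgClosed.splits _⟩
  let M := FractionRing (PowerSeries F)
  let Ω' := AlgebraicClosure M
  let ψ : F[X] →+* Ω' :=
    (algebraMap (PowerSeries F) Ω').comp (coeToPowerSeries.ringHom (R := F))
  have hPSinj : Function.Injective (algebraMap (PowerSeries F) Ω') := by
    rw [IsScalarTower.algebraMap_eq (PowerSeries F) M Ω']
    exact (algebraMap M Ω').injective.comp (IsFractionRing.injective (PowerSeries F) M)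
  have hψ : Function.Injective ψ := hPSinj.comp (coe_injective F)
  have hψC : ∀ c, ψ (C c) = algebraMap F Ω' c := by
    intro c
    rw [IsScalarTower.algebraMap_apply F (PowerSeries F) Ω']
    simp [ψ]
  let t' : Ω' := algebraMap (PowerSeries F) Ω' PowerSeries.X
  have hψX : ψ X = t' := by simp [ψ, t']
  have htr' : Transcendental F t' := by
    rw [transcendental_iff_injective]
    have : (aeval t' : F[X] →ₐ[F] Ω').toRingHom = ψ := by
      refine Polynomial.ringHom_ext (fun a => ?_) ?_
      · rw [hψC]; simp
      · rw [hψX]; simp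
    exact (this ▸ hψ : Function.Injective (aeval t' : F[X] →ₐ[F] Ω').toRingHom)
  let jK : K →+* Ω' := IsFractionRing.lift hψ
  have hjK : ∀ f : F[X], jK (algebraMap F[X] K f) = ψ f := fun f => IsFractionRing.lift_algebraMap hψ f
  let _ : Algebra K Ω' := jK.toAlgebra
  let ι : Ω →ₐ[K] Ω' := IsAlgClosed.lift
  have hιψ : ∀ f : F[X], ι (algebraMap F[X] Ω f) = ψ f := by
    intro f
    rw [IsScalarTower.algebraMap_apply F[X] K Ω, ι.commutes]
    exact hjK f
  have hιF : (ι : Ω →+* Ω').comp (algebraMap F Ω) = algebraMap F Ω' := by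
    ext c
    have := hιψ (C c)
    rw [hψC] at this
    rw [← this, RingHom.comp_apply, IsScalarTower.algebraMap_apply F F[X] Ω]
    rfl
  have hιt : ι t = t' := by rw [ht, hιψ, hψX]
  have hιinj : Function.Injective ι := ι.toRingHom.injective
  have hιroot : ∀ c, aeval (ι c) p = t' * ι c ↔ aeval c p = t * c := by
    intro c
    rw [← hιt, ← map_mul, ← hιinj.eq_iff]
    have : ι (aeval c p) = aeval (ι c) p := by
      change (ι : Ω →+* Ω') (aeval c p) = _
      rw [aeval_def, hom_eval₂, hιF]; rfl
    rw [this]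
  have hlift : ∀ c' : Ω', aeval c' p = t' * c' → ∃ c, ι c = c' := by
    intro c' hc'
    set P : Polynomial Ω := p.map (algebraMap F Ω) - C t * X with hP
    have hlow : degree (C t * X) < degree (p.map (algebraMap F Ω)) := by
      refine lt_of_le_of_lt (degree_C_mul_X_le _) ?_
      rw [degree_map, degree_eq_natDegree hp.ne_zero]
      exact_mod_cast (by omega : 1 < p.natDegree)
    have hPm : P.Monic := (hp.map _).sub_of_left hlow
    have h1 : c' ∈ (P.map (ι : Ω →+* Ω')).roots := by
      rw [mem_roots (hPm.map _).ne_zero, IsRoot, hP]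
      rw [Polynomial.map_sub, Polynomial.map_map, hιF]
      simp [hc', hιt]
    rw [(IsAlgClosed.splits P).roots_map] at h1
    obtain ⟨c, -, hc⟩ := Multiset.mem_map.1 h1
    exact ⟨c, hc⟩
  obtain ⟨τ, a', b', ha', hb', hab', hτab, hτ⟩ :=
    pencil_local_swap hp hp0 hdeg hpg hg hg1 (M := M) (Ω := Ω') rfl htr'
  obtain ⟨a, rfl⟩ := hlift a' ha'
  obtain ⟨b, rfl⟩ := hlift b' hb'
  let τK : Ω' ≃ₐ[K] Ω' := AlgEquiv.ofRingEquiv (f := τ.toRingEquiv) (by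
    intro x
    have : (τ.toRingEquiv.toRingHom).comp (algebraMap K Ω') = algebraMap K Ω' := by
      apply IsLocalization.ringHom_ext (nonZeroDivisors F[X])
      refine RingHom.ext fun f => ?_
      have h1 : algebraMap K Ω' (algebraMap F[X] K f) =
          algebraMap M Ω' (algebraMap (PowerSeries F) M f) := by
        rw [← IsScalarTower.algebraMap_apply (PowerSeries F) M Ω']
        exact hjK f
      simp only [RingHom.comp_apply, h1]
      exact τ.commutes _
    exact RingHom.congr_fun this x)
  let _ : Algebra Ω Ω' := ι.toRingHom.toAlgebra
  have : IsScalarTower K Ω Ω' := IsScalarTower.of_algebraMap_eq fun x => (ι.commutes x).symm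
  have hres : ∀ x, ι (τK.restrictNormal Ω x) = τ (ι x) :=
    fun x => τK.restrictNormal_commutes Ω x
  refine ⟨τK.restrictNormal Ω, a, b, (hιroot a).1 ha', (hιroot b).1 hb',
    fun h => hab' (by rw [h]), ?_, ?_⟩
  · apply hιinj
    rw [hres, hτab]
  · intro c hc hca hcb
    apply hιinj
    rw [hres]
    exact hτ _ ((hιroot c).2 hc) (hιinj.ne hca) (hιinj.ne hcb)

/-! ### The full symmetric group -/

/-- The Galois group of `p - tX` over `F(t)` is the full symmetric group of the roots: it contains a
transposition, and the stabilizer of each root is transitive on the others, so it contains every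
transposition. -/
lemma pencil_symmetric {F K Ω I : Type*} [Field F] [IsAlgClosed F] [Field K] [Field Ω]
    [Algebra F[X] K] [IsFractionRing F[X] K] [Algebra F[X] Ω] [Algebra K Ω]
    [IsScalarTower F[X] K Ω] [IsAlgClosure K Ω] [Algebra F Ω] [IsScalarTower F F[X] Ω] [Finite I]
    {p g : F[X]} (hp : p.Monic) (hp0 : p.coeff 0 ≠ 0) (hdeg : 3 ≤ p.natDegree)
    (hpg : p = (X - 1) ^ 2 * g) (hg : g.Separable) (hg1 : g.eval 1 ≠ 0)
    {y : I → Ω} (hinj : Function.Injective y)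
    (hy : ∀ c, aeval c p = algebraMap F[X] Ω X * c ↔ c ∈ Set.range y) (π : Equiv.Perm I) :
    ∃ σ : Ω ≃ₐ[K] Ω, ∀ i, σ (y i) = y (π i) := by
  classical
  -- the permutations of the roots induced by automorphisms
  let G : Subgroup (Equiv.Perm I) :=
    { carrier := {π | ∃ σ : Ω ≃ₐ[K] Ω, ∀ i, σ (y i) = y (π i)}
      one_mem' := ⟨1, fun i => rfl⟩
      mul_mem' := by
        rintro π₁ π₂ ⟨σ₁, h₁⟩ ⟨σ₂, h₂⟩
        exact ⟨σ₁ * σ₂, fun i => by simp [AlgEquiv.mul_apply, h₁, h₂]⟩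
      inv_mem' := by
        rintro π ⟨σ, h⟩
        refine ⟨σ⁻¹, fun i => ?_⟩
        apply σ.injective
        rw [h]
        simp }
  have hperm : ∀ σ : Ω ≃ₐ[K] Ω, ∃ π ∈ G, ∀ i, σ (y i) = y (π i) := by
    intro σ
    have hfix : ∀ f : F[X], σ (algebraMap F[X] Ω f) = algebraMap F[X] Ω f := by
      intro f
      rw [IsScalarTower.algebraMap_apply F[X] K Ω, σ.commutes]
    have hcomp : (σ : Ω →+* Ω).comp (algebraMap F Ω) = algebraMap F Ω := by
      ext c
      simp only [RingHom.comp_apply, IsScalarTower.algebraMap_apply F F[X] Ω]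
      exact hfix _
    have hroot : ∀ i, σ (y i) ∈ Set.range y := by
      intro i
      rw [← hy]
      have h2 := congrArg (σ : Ω →+* Ω) ((hy (y i)).2 ⟨i, rfl⟩)
      rw [aeval_def, hom_eval₂, hcomp, ← aeval_def, map_mul] at h2
      simpa [hfix] using h2
    choose r hr using hroot
    have hrinj : Function.Injective r := by
      intro i j hij
      apply hinj
      apply σ.injective
      rw [← hr, ← hr, hij]
    refine ⟨Equiv.ofBijective r (Finite.injective_iff_bijective.1 hrinj), ⟨σ, ?_⟩, ?_⟩ <;>
    · intro i
      simp [hr]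
  have htrans : ∀ i j l, j ≠ i → l ≠ i → ∃ π ∈ G, π i = i ∧ π j = l := by
    intro i j l hj hl
    obtain ⟨σ, h1, h2⟩ := pencil_stabilizer_transitive (K := K) hp hp0 hdeg
      ((hy (y i)).2 ⟨i, rfl⟩) ((hy (y j)).2 ⟨j, rfl⟩) ((hy (y l)).2 ⟨l, rfl⟩)
      (hinj.ne hj) (hinj.ne hl)
    obtain ⟨π, hπ, h⟩ := hperm σ
    exact ⟨π, hπ, hinj (by rw [← h, h1]), hinj (by rw [← h, h2])⟩
  have hconj : ∀ i j (π : Equiv.Perm I), π ∈ G → Equiv.swap i j ∈ G →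
      Equiv.swap (π i) (π j) ∈ G := by
    intro i j π hπ hij
    rw [Equiv.swap_apply_apply]
    exact G.mul_mem (G.mul_mem hπ hij) (G.inv_mem hπ)
  obtain ⟨a, b, hab, hswap⟩ : ∃ a b, a ≠ b ∧ Equiv.swap a b ∈ G := by
    obtain ⟨τ, a', b', ha, hb, hab, hτab, hτ⟩ :=
      pencil_swap (K := K) (Ω := Ω) hp hp0 hdeg hpg hg hg1 rfl
    obtain ⟨a, rfl⟩ := (hy a').1 ha
    obtain ⟨b, rfl⟩ := (hy b').1 hb
    have hab' : a ≠ b := fun h => hab (by rw [h])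
    obtain ⟨π, hπ, h⟩ := hperm τ
    have h1 : π a = b := hinj (by rw [← h, hτab])
    have h2 : ∀ i, i ≠ a → i ≠ b → π i = i := fun i hia hib =>
      hinj (by rw [← h, hτ _ ((hy _).2 ⟨i, rfl⟩) (hinj.ne hia) (hinj.ne hib)])
    have h3 : π b = a := by
      by_contra h3
      have h4 : π b ≠ b := fun h4 => hab' (π.injective (h1.trans h4.symm))
      exact h4 (π.injective (h2 _ h3 h4))
    refine ⟨a, b, hab', ?_⟩
    convert hπ
    ext i
    by_cases hia : i = a
    · subst hia; simp [h1]
    by_cases hib : i = b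
    · subst hib; simp [h3]
    rw [Equiv.swap_apply_of_ne_of_ne hia hib, h2 i hia hib]
  have hstep : ∀ c, c ≠ b → Equiv.swap c b ∈ G := by
    intro c hcb
    obtain ⟨π, hπ, h1, h2⟩ := htrans b a c hab hcb
    simpa [h1, h2] using hconj a b π hπ hswap
  have hall : ∀ c d, c ≠ d → Equiv.swap c d ∈ G := by
    intro c d hcd
    by_cases hcb : c = b
    · subst hcb
      rw [Equiv.swap_comm]
      exact hstep d hcd.symm
    · obtain ⟨π, hπ, h1, h2⟩ := htrans c b d (Ne.symm hcb) hcd.symm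
      simpa [h1, h2] using hconj c b π hπ (hstep c hcb)
  have htop : G = ⊤ := by
    rw [eq_top_iff, ← Equiv.Perm.closure_isSwap, Subgroup.closure_le]
    rintro _ ⟨c, d, hcd, rfl⟩
    exact hall c d hcd
  have : π ∈ G := htop ▸ Subgroup.mem_top π
  exact this

/-! ### A polynomial of the required shape with a double root -/

/-- The base point of the pencil. The polynomial `Xⁿ - nX + (n - 1)` is divisible by `(X - 1)²`; adding
`(X - 1)² (uX + v)` keeps the shape and replaces the cofactor `g₀` by `g₀ + uX + v`. A suitable `u`
makes the derivative of the cofactor nonzero, and then all but finitely many `v` make it separable. -/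
lemma exists_double_root_poly (k : Type*) [Field k] [Infinite k] (n : ℕ) :
    ∃ (a b c d : k) (g : k[X]),
      X ^ n + C a * X ^ 3 + C b * X ^ 2 + C c * X + C d = (X - 1) ^ 2 * g ∧
      g.Separable ∧ g.eval 1 ≠ 0 ∧ d ≠ 0 := by
  classical
  obtain ⟨g₀, hg₀⟩ : (X - 1) ^ 2 ∣ (X ^ n - C (n : k) * X + C ((n : k) - 1) : k[X]) := by
    have hne : (X ^ n - C (n : k) * X + C ((n : k) - 1) : k[X]) = 0 ∨
      1 < (X ^ n - C (n : k) * X + C ((n : k) - 1) : k[X]).rootMultiplicity 1 := by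
      by_cases h : (X ^ n - C (n : k) * X + C ((n : k) - 1) : k[X]) = 0
      · exact Or.inl h
      · right
        rw [one_lt_rootMultiplicity_iff_isRoot h]
        constructor <;> simp [IsRoot, derivative_X_pow]
    rcases hne with h | h
    · rw [h]; exact dvd_zero _
    · rw [← C_1]
      exact (pow_dvd_pow _ h).trans (pow_rootMultiplicity_dvd _ _)
  obtain ⟨u, hu⟩ : ∃ u : k, derivative (g₀ + C u * X) ≠ 0 := by
    by_contra! h
    have h0 : derivative g₀ = 0 := by simpa using h 0
    have h1 := h 1
    rw [derivative_add, derivative_C_mul_X, h0] at h1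
    simp at h1
  set h := g₀ + C u * X with hh
  let A := AlgebraicClosure k
  -- the values of `v` for which `h + v` has a multiple root
  let bad : Finset A := ((derivative h).aroots A).toFinset.image (fun r => -aeval r h)
  let bad' : Finset k := bad.preimage (algebraMap k A) (algebraMap k A).injective.injOn ∪
    {-h.eval 1, -((n : k) - 1)}
  obtain ⟨v, hv⟩ := Infinite.exists_notMem_finset bad'
  simp only [bad', Finset.mem_union, Finset.mem_preimage, Finset.mem_insert,
    Finset.mem_singleton, not_or] at hv
  obtain ⟨hv1, hv2, hv3⟩ := hv
  refine ⟨u, v - 2 * u, u - 2 * v - n, n - 1 + v, h + C v, ?_, ?_, ?_, ?_⟩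
  · rw [hh]
    have : (X - 1) ^ 2 * (g₀ + C u * X + C v) =
        (X ^ n - C (n : k) * X + C ((n : k) - 1) : k[X]) + (X - 1) ^ 2 * (C u * X + C v) := by
      rw [hg₀]; ring
    rw [this]
    simp only [map_sub, map_add, map_mul, map_one, map_ofNat, map_natCast]
    ring
  · rw [separable_def, isCoprime_iff_aeval_ne_zero_of_isAlgClosed k A]
    intro r
    by_contra! hr
    obtain ⟨hr1, hr2⟩ := hr
    apply hv1
    refine Finset.mem_image.2 ⟨r, ?_, ?_⟩
    · rw [Multiset.mem_toFinset, mem_aroots]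
      exact ⟨hu, by simpa using hr2⟩
    · rw [map_add, aeval_C] at hr1
      exact (eq_neg_of_add_eq_zero_right hr1).symm
  · intro h0
    rw [eval_add, eval_C] at h0
    exact hv2 (eq_neg_of_add_eq_zero_right h0)
  · intro h0
    exact hv3 (eq_neg_of_add_eq_zero_right h0)

/-! ### The resolvent -/

/-- The product `∏_π (Z - ∑ᵢ vᵢ Y_{π i})` over all permutations `π` of the finite index set `I`, as a
polynomial in the variables `Yᵢ` whose coefficients are polynomials in the variable `Z`. -/
noncomputable def universalResolvent {I A : Type*} [Fintype I] [DecidableEq I] [CommRing A]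
    (v : I → A) : MvPolynomial I A[X] :=
  ∏ π : Equiv.Perm I, (MvPolynomial.C X - ∑ i, MvPolynomial.C (C (v i)) * MvPolynomial.X (π i))

lemma universalResolvent_rename {I A : Type*} [Fintype I] [DecidableEq I] [CommRing A]
    (v : I → A) (e : Equiv.Perm I) :
    MvPolynomial.rename e (universalResolvent v) = universalResolvent v := by
  simp only [universalResolvent, map_prod, map_sub, map_sum, map_mul, MvPolynomial.rename_C,
    MvPolynomial.rename_X]
  exact Fintype.prod_equiv (Equiv.mulLeft e) _ _ fun π => by simp

lemma universalResolvent_comp_perm {I A : Type*} [Fintype I] [DecidableEq I] [CommRing A]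
    (v : I → A) (e : Equiv.Perm I) :
    universalResolvent (v ∘ e) = universalResolvent v := by
  simp only [universalResolvent]
  refine Fintype.prod_equiv (Equiv.mulRight e⁻¹) _ _ fun π => ?_
  congr 1
  exact Fintype.sum_equiv e _ _ fun i => by simp

lemma universalResolvent_map {I A B : Type*} [Fintype I] [DecidableEq I] [CommRing A] [CommRing B]
    (f : A →+* B) (v : I → A) :
    MvPolynomial.map (mapRingHom f) (universalResolvent v) = universalResolvent (f ∘ v) := by
  simp [universalResolvent, map_prod, map_sub, map_sum, map_mul]

lemma universalResolvent_eval {I A D : Type*} [Fintype I] [DecidableEq I] [CommRing A] [CommRing D]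
    (f : A →+* D) (v : I → A) (y : I → D) :
    MvPolynomial.eval₂ (mapRingHom f) (fun i => C (y i)) (universalResolvent v) =
      ∏ π : Equiv.Perm I, (X - C (∑ i, f (v i) * y (π i))) := by
  rw [← MvPolynomial.coe_eval₂Hom]
  simp [universalResolvent, map_prod, map_sub, map_sum, map_mul]

/-- When the Galois group of `k` permutes the separable elements `vᵢ`, the universal resolvent has
coefficients in `k`. -/
lemma universalResolvent_descends {k A I : Type*} [Field k] [Field A] [Algebra k A]
    [IsAlgClosure k A] [Fintype I] [DecidableEq I] (v : I → A) (hsep : ∀ i, IsSeparable k (v i))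
    (hperm : ∀ τ : A ≃ₐ[k] A, ∃ e : Equiv.Perm I, ∀ i, τ (v i) = v (e i)) :
    ∃ V : MvPolynomial I k[X],
      MvPolynomial.map (mapRingHom (algebraMap k A)) V = universalResolvent v := by
  have hAc : IsAlgClosed A := IsAlgClosure.isAlgClosed k
  have hAalg : Algebra.IsAlgebraic k A := IsAlgClosure.isAlgebraic
  have hn : Normal k A :=
    normal_iff.2 fun x => ⟨(hAalg.isAlgebraic x).isIntegral, IsAlgClosed.splits _⟩
  have hcoeff : ∀ m j, ((universalResolvent v).coeff m).coeff j ∈ (algebraMap k A).range := by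
    intro m j
    set c := ((universalResolvent v).coeff m).coeff j with hc
    have hcsep : IsSeparable k c := by
      let v' : I → separableClosure k A := fun i => ⟨v i, mem_separableClosure_iff.2 (hsep i)⟩
      have h1 : universalResolvent v = MvPolynomial.map
          (mapRingHom (algebraMap (separableClosure k A) A)) (universalResolvent v') := by
        rw [universalResolvent_map]; rfl
      rw [hc, h1, MvPolynomial.coeff_map, coe_mapRingHom, coeff_map, ← mem_separableClosure_iff]
      exact SetLike.coe_mem _
    have hfix : ∀ τ : A ≃ₐ[k] A, τ c = c := by
      intro τ
      obtain ⟨e, he⟩ := hperm τ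
      have h1 : MvPolynomial.map (mapRingHom (τ : A →+* A)) (universalResolvent v) =
          universalResolvent v := by
        rw [universalResolvent_map, ← universalResolvent_comp_perm v e]
        congr 1
        funext i
        exact he i
      have h2 := congrArg (fun q => (q.coeff m).coeff j) h1
      simp only [MvPolynomial.coeff_map, coe_mapRingHom, coeff_map] at h2
      exact h2
    have hbot : c ∈ (⊥ : IntermediateField k A) := by
      by_contra hnot
      obtain ⟨c', hne, hconj⟩ :=
        (notMem_iff_exists_ne_and_isConjRoot hcsep (IsAlgClosed.splits _)).1 hnot
      obtain ⟨τ, hτ⟩ := isConjRoot_iff_exists_algEquiv.1 hconj.symm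
      exact hne (by rw [← hτ, hfix])
    exact IntermediateField.mem_bot.1 hbot
  have : universalResolvent v ∈
      Set.range (MvPolynomial.map (σ := I) (mapRingHom (algebraMap k A))) := by
    rw [MvPolynomial.mem_range_map_iff_coeffs_subset]
    intro q hq
    obtain ⟨m, -, rfl⟩ := MvPolynomial.mem_coeffs_iff.1 hq
    exact (mem_map_range (algebraMap k A)).2 (hcoeff m)
  exact this

universe u in
/-- The resolvent of a polynomial `P` over `k[t]` of degree `card I`, whose coefficients are
polynomials in those of `P`, by the theorem on symmetric functions. In every specialization `φ` for
which `P` becomes `∏ᵢ (X - yᵢ)`, its roots are the sums `∑ᵢ vᵢ y_{π i}`. -/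
lemma exists_resolvent {k : Type*} {A : Type u} {I : Type*} [Field k] [Field A] [Algebra k A]
    [IsAlgClosure k A] [Fintype I] [DecidableEq I] (v : I → A) (hsep : ∀ i, IsSeparable k (v i))
    (hperm : ∀ τ : A ≃ₐ[k] A, ∃ e : Equiv.Perm I, ∀ i, τ (v i) = v (e i)) (P : k[X][X]) :
    ∃ R : k[X][X], ∀ (D : Type u) [CommRing D] [Algebra A D] (φ : k[X] →+* D) (y : I → D),
      φ.comp C = (algebraMap A D).comp (algebraMap k A) →
      P.map φ = ∏ i, (X - C (y i)) →
      R.map φ = ∏ π : Equiv.Perm I, (X - C (∑ i, algebraMap A D (v i) * y (π i))) := by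
  obtain ⟨V, hV⟩ := universalResolvent_descends v hsep hperm
  have hinj : Function.Injective (MvPolynomial.map (σ := I) (mapRingHom (algebraMap k A))) :=
    MvPolynomial.map_injective _ (map_injective _ (algebraMap k A).injective)
  have hVsymm : V.IsSymmetric := by
    intro e
    apply hinj
    rw [MvPolynomial.map_rename, hV, universalResolvent_rename]
  let n := Fintype.card I
  obtain ⟨Q, hQ⟩ := MvPolynomial.esymmAlgHom_surjective (σ := I) (n := n) k[X] le_rfl
    ⟨V, hVsymm⟩
  have hQ' : MvPolynomial.aeval (fun j : Fin n => MvPolynomial.esymm I k[X] (j + 1)) Q = V := by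
    rw [← MvPolynomial.esymmAlgHom_apply, hQ]
  refine ⟨MvPolynomial.eval₂ (mapRingHom C)
    (fun j : Fin n => C ((-1) ^ ((j : ℕ) + 1) * P.coeff (n - (j + 1)))) Q, ?_⟩
  intro D _ _ φ y hφ hP
  rw [← universalResolvent_eval (algebraMap A D) v y, ← hV, MvPolynomial.eval₂_map, ← hQ',
    ← coe_mapRingHom φ, ← MvPolynomial.coe_eval₂Hom, ← MvPolynomial.coe_eval₂Hom]
  rw [← RingHom.comp_apply, ← AlgHom.coe_toRingHom, ← RingHom.comp_apply]
  congr 1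
  apply MvPolynomial.ringHom_ext
  · intro q
    simp [hφ]
  · intro j
    have h1 := Multiset.prod_X_sub_C_coeff (Finset.univ.val.map y) (k := n - (j + 1)) (by simp [n])
    rw [Multiset.map_map, Multiset.card_map, Finset.card_val, Finset.card_univ] at h1
    have h2 : Fintype.card I - (n - ((j : ℕ) + 1)) = j + 1 := by
      have := j.2
      omega
    have h3 : (P.map φ).coeff (n - (j + 1)) =
        (-1) ^ ((j : ℕ) + 1) * (Finset.univ.val.map y).esymm (j + 1) := by
      rw [h2] at h1
      rw [hP]
      exact h1
    rw [coeff_map] at h3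
    have h4 : (((-1) ^ ((j : ℕ) + 1)) * ((-1) ^ ((j : ℕ) + 1)) : D) = 1 := by
      rw [← mul_pow]; simp
    have h5 : φ ((-1) ^ ((j : ℕ) + 1) * P.coeff (n - (j + 1))) =
        (Finset.univ.val.map y).esymm (j + 1) := by
      rw [map_mul, h3, ← mul_assoc, map_pow, map_neg, map_one, h4, one_mul]
    have h6 : (Finset.univ.val.map y).esymm (j + 1) =
        MvPolynomial.aeval (R := ℤ) y (MvPolynomial.esymm I ℤ (j + 1)) :=
      (MvPolynomial.aeval_esymm_eq_multiset_esymm I ℤ _ _).symm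
    simp only [RingHom.comp_apply, MvPolynomial.coe_eval₂Hom, MvPolynomial.eval₂_X,
      coe_mapRingHom, map_C, h5, h6, AlgHom.coe_toRingHom, MvPolynomial.aeval_X]
    simp only [MvPolynomial.esymm, map_sum, map_prod, MvPolynomial.aeval_X,
      MvPolynomial.eval₂_sum, MvPolynomial.eval₂_prod, MvPolynomial.eval₂_X]

/-! ### Distinctness, irreducibility and specialization of the resolvent -/

/-- The `w` for which two given sums coincide form a `k`-subspace of `E`, proper by the linear
independence of the embeddings of `E`. Over an infinite field, finitely many proper subspaces do
not cover `E`. -/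
lemma exists_separating_element {k E F Ω : Type*} [Field k] [Infinite k] [Field E] [Field F]
    [Field Ω] [Algebra k E] [Algebra k F] [Fintype (E →ₐ[k] F)] (ψ : F →+* Ω)
    {y : (E →ₐ[k] F) → Ω} (hy : Function.Injective y) :
    ∃ w : E, Function.Injective
      fun π : Equiv.Perm (E →ₐ[k] F) => ∑ i, ψ (i w) * y (π i) := by
  classical
  let V : Equiv.Perm (E →ₐ[k] F) → Equiv.Perm (E →ₐ[k] F) → Submodule k E := fun π ρ =>
    { carrier := {w | ∑ i, ψ (i w) * (y (π i) - y (ρ i)) = 0}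
      zero_mem' := by simp
      add_mem' := by
        intro a b ha hb
        simp only [Set.mem_ofPred_eq, map_add, add_mul, Finset.sum_add_distrib] at *
        rw [ha, hb, add_zero]
      smul_mem' := by
        intro c a ha
        simp only [Set.mem_ofPred_eq, Algebra.smul_def, map_mul, mul_assoc,
          AlgHom.commutes, ← Finset.mul_sum] at *
        rw [ha, mul_zero] }
  let s : Finset (Submodule k E) :=
    (Finset.univ.filter fun q : Equiv.Perm (E →ₐ[k] F) × Equiv.Perm (E →ₐ[k] F) =>
      q.1 ≠ q.2).image fun q => V q.1 q.2
  have hs : ⊤ ∉ s := by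
    intro h
    obtain ⟨⟨π, ρ⟩, hne, htop⟩ := Finset.mem_image.1 h
    simp only [Finset.mem_filter, Finset.mem_univ, true_and] at hne
    apply hne
    have hli := (linearIndependent_monoidHom E Ω).comp
      (fun i : E →ₐ[k] F => ((ψ.comp (i : E →+* F) : E →+* Ω) : E →* Ω)) (by
        intro i j hij
        ext x
        exact ψ.injective (DFunLike.congr_fun hij x))
    rw [Fintype.linearIndependent_iff] at hli
    have h0 := hli (fun i => y (π i) - y (ρ i)) (by
      funext w
      have hw : w ∈ V π ρ := by
        simp only at htop
        rw [htop]; trivial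
      rw [Finset.sum_apply, Pi.zero_apply]
      rw [← show ∑ i, ψ (i w) * (y (π i) - y (ρ i)) = 0 from hw]
      exact Finset.sum_congr rfl fun i _ => mul_comm _ _)
    ext1 i
    exact hy (sub_eq_zero.1 (h0 i))
  have hne := Subspace.biUnion_ne_univ_of_top_notMem hs
  obtain ⟨w, hw⟩ := (Set.ne_univ_iff_exists_notMem _).1 hne
  refine ⟨w, fun π ρ hπρ => ?_⟩
  by_contra hne'
  apply hw
  simp only [Set.mem_iUnion]
  refine ⟨V π ρ, Finset.mem_image.2 ⟨(π, ρ), by simpa using hne', rfl⟩, ?_⟩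
  change ∑ i, ψ (i w) * (y (π i) - y (ρ i)) = 0
  simp only [mul_sub, Finset.sum_sub_distrib]
  exact sub_eq_zero.2 hπρ

/-- A polynomial over an integrally closed domain whose roots are distinct and all conjugate over the
fraction field is irreducible. -/
lemma irreducible_of_conjugate_roots {A K Ω J : Type*} [CommRing A] [IsDomain A]
    [IsIntegrallyClosed A] [Field K] [Algebra A K] [IsFractionRing A K] [Field Ω] [Algebra A Ω]
    [Algebra K Ω] [IsScalarTower A K Ω] [Fintype J] [Nonempty J] {z : J → Ω}
    (hz : Function.Injective z) (hconj : ∀ j j', ∃ σ : Ω ≃ₐ[K] Ω, σ (z j) = z j') {R : A[X]}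
    (hR : R.map (algebraMap A Ω) = ∏ j, (X - C (z j))) : Irreducible R := by
  classical
  have hprod : (∏ j, (X - C (z j))).Monic := monic_prod_of_monic _ _ fun j _ => monic_X_sub_C _
  have hAinj : Function.Injective (algebraMap A Ω) := by
    rw [IsScalarTower.algebraMap_eq A K Ω]
    exact (algebraMap K Ω).injective.comp (IsFractionRing.injective A K)
  have hmon : R.Monic := by
    rw [hAinj.monic_map_iff, hR]
    exact hprod
  rw [hmon.irreducible_iff_irreducible_map_fraction_map (K := K)]
  have hRK : (R.map (algebraMap A K)).map (algebraMap K Ω) = ∏ j, (X - C (z j)) := by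
    rw [map_map, ← IsScalarTower.algebraMap_eq, hR]
  obtain ⟨j₀⟩ := ‹Nonempty J›
  have hroot : aeval (z j₀) (R.map (algebraMap A K)) = 0 := by
    rw [aeval_def, eval₂_eq_eval_map, hRK, eval_prod]
    exact Finset.prod_eq_zero (Finset.mem_univ j₀) (by simp)
  have hint : IsIntegral K (z j₀) := ⟨_, hmon.map _, hroot⟩
  have hdeg : (R.map (algebraMap A K)).natDegree ≤ (minpoly K (z j₀)).natDegree := by
    have h1 : (R.map (algebraMap A K)).natDegree = Fintype.card J := by
      rw [← natDegree_map (algebraMap K Ω), hRK, natDegree_prod_of_monic _ _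
        fun j _ => monic_X_sub_C _]
      simp
    rw [h1, ← natDegree_map (algebraMap K Ω), ← Finset.card_univ,
      ← Finset.card_image_of_injective _ hz]
    refine card_le_degree_of_subset_roots fun x hx => ?_
    obtain ⟨j, -, rfl⟩ := Finset.mem_image.1 hx
    rw [mem_roots ((minpoly.monic hint).map _).ne_zero, IsRoot, ← eval₂_eq_eval_map,
      ← aeval_def]
    obtain ⟨σ, hσ⟩ := hconj j₀ j
    rw [← hσ, aeval_algHom_apply σ, minpoly.aeval, map_zero]
  rw [eq_of_monic_of_dvd_of_natDegree_le (minpoly.monic hint) (hmon.map _)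
    (minpoly.dvd _ _ hroot) hdeg]
  exact minpoly.irreducible hint

/-- If `R` is generically separable, it stays separable in every specialization in which a certain
nonzero `δ` does not vanish. Here `δ` comes from clearing denominators in a Bézout relation between
`R` and its derivative. -/
lemma exists_discriminant {A Ω : Type*} [CommRing A] [IsDomain A] [Field Ω] {φ : A →+* Ω}
    (hφ : Function.Injective φ) {R : A[X]} (hR : (R.map φ).Separable) :
    ∃ δ : A, δ ≠ 0 ∧ ∀ {D : Type*} [Field D] (ψ : A →+* D), ψ δ ≠ 0 → (R.map ψ).Separable := by
  let L := FractionRing A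
  have hLinj := IsFractionRing.injective A L
  have hsep : (R.map (algebraMap A L)).Separable := by
    rw [← separable_map (IsFractionRing.lift hφ : L →+* Ω), map_map]
    have hcomp : (IsFractionRing.lift hφ : L →+* Ω).comp (algebraMap A L) = φ := by
      ext a
      simp [L]
    rw [hcomp]
    exact hR
  obtain ⟨a, b, hab⟩ := hsep
  obtain ⟨α, hα, ha⟩ := IsLocalization.integerNormalization_spec (nonZeroDivisors A) a
  obtain ⟨β, hβ, hb⟩ := IsLocalization.integerNormalization_spec (nonZeroDivisors A) b
  set a' := IsLocalization.integerNormalization (nonZeroDivisors A) a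
  set b' := IsLocalization.integerNormalization (nonZeroDivisors A) b
  have hbez : (C β * a') * R + (C α * b') * derivative R = C (α * β) := by
    apply map_injective _ hLinj
    simp only [Polynomial.map_add, Polynomial.map_mul, ha, hb, map_C, ← derivative_map,
      Algebra.smul_def, map_mul]
    linear_combination (C (algebraMap A L α) * C (algebraMap A L β)) * hab
  refine ⟨α * β, mul_ne_zero (nonZeroDivisors.ne_zero hα) (nonZeroDivisors.ne_zero hβ), ?_⟩
  intro D _ ψ hψ
  have h := congrArg (Polynomial.map ψ) hbez
  simp only [Polynomial.map_add, Polynomial.map_mul, map_C, ← derivative_map] at h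
  refine ⟨C (ψ (α * β))⁻¹ * (C (ψ β) * a'.map ψ), C (ψ (α * β))⁻¹ * (C (ψ α) * b'.map ψ), ?_⟩
  have h2 : (C (ψ (α * β))⁻¹ * C (ψ (α * β)) : D[X]) = 1 := by
    rw [← C_mul, inv_mul_cancel₀ hψ, C_1]
  linear_combination C (ψ (α * β))⁻¹ * h + h2

/-! ### Rational zeros over a PAC field -/

lemma IsPAC.infinite {k : Type*} [Field k] (h : IsPAC k) : Infinite k := by
  have hX := h (MvPolynomial.X 0) (by
    rw [MvPolynomial.map_X]
    exact MvPolynomial.X_prime.irreducible)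
  by_contra hfin
  rw [not_infinite_iff_finite] at hfin
  exact hX (Set.toFinite _)

/-- The PAC property for a polynomial `R(t, Z)` monic in `Z`: it has a rational zero at which `δ(t) ≠ 0`,
since only finitely many zeros lie over the roots of `δ`. -/
lemma IsPAC.exists_zero {k : Type*} [Field k] (h : IsPAC k) {R : k[X][X]} (hmon : R.Monic)
    (hirr : Irreducible (R.map (mapRingHom (algebraMap k (AlgebraicClosure k)))))
    {δ : k[X]} (hδ : δ ≠ 0) :
    ∃ t z : k, δ.eval t ≠ 0 ∧ (R.map (evalRingHom t)).eval z = 0 := by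
  classical
  let F := AlgebraicClosure k
  have hmap : MvPolynomial.map (algebraMap k F) (Bivariate.equivMvPolynomial k R) =
      Bivariate.equivMvPolynomial F (R.map (mapRingHom (algebraMap k F))) := by
    have hhom : (MvPolynomial.map (algebraMap k F)).comp
        ((Bivariate.equivMvPolynomial k).toRingEquiv.toRingHom) =
        ((Bivariate.equivMvPolynomial F).toRingEquiv.toRingHom).comp
          (mapRingHom (mapRingHom (algebraMap k F))) := by
      ext <;> simp
    exact DFunLike.congr_fun hhom R
  have heval : ∀ t z : k, MvPolynomial.eval ![t, z] (Bivariate.equivMvPolynomial k R) =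
      (R.map (evalRingHom t)).eval z := by
    intro t z
    have hhom : (MvPolynomial.eval ![t, z]).comp
        ((Bivariate.equivMvPolynomial k).toRingEquiv.toRingHom) =
        (evalRingHom z).comp (mapRingHom (evalRingHom t)) := by
      ext <;> simp
    exact DFunLike.congr_fun hhom R
  have hinf := h (Bivariate.equivMvPolynomial k R) (by
    rw [hmap]
    exact (MulEquiv.irreducible_iff (Bivariate.equivMvPolynomial F)).2 hirr)
  by_contra! hbad
  refine hinf (Set.Finite.subset (s := ⋃ t ∈ δ.roots.toFinset,
    (fun z => (t, z)) '' ((R.map (evalRingHom t)).roots.toFinset : Set k)) ?_ ?_)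
  · exact Set.Finite.biUnion (Finset.finite_toSet _) fun t _ =>
      (Finset.finite_toSet _).image _
  · rintro ⟨t, z⟩ htz
    have hz : (R.map (evalRingHom t)).eval z = 0 := by
      rw [← heval]; exact htz
    have ht : δ.eval t = 0 := by
      by_contra ht
      exact hbad t z ht hz
    simp only [Set.mem_iUnion]
    refine ⟨t, ?_, z, ?_, rfl⟩
    · simpa [hδ] using ht
    · rw [Finset.mem_coe, Multiset.mem_toFinset, mem_roots (hmon.map _).ne_zero]
      exact hz

lemma exists_eq_prod_X_sub_C {L I : Type*} [Field L] [Fintype I] {Q : L[X]} (hQ : Q.Monic)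
    (hs : Q.Splits) (hcard : Q.natDegree = Fintype.card I) :
    ∃ y : I → L, Q = ∏ i, (X - C (y i)) := by
  obtain ⟨l, hl⟩ := Quotient.exists_rep Q.roots
  have hlen : l.length = Fintype.card I := by
    rw [← hcard, hs.natDegree_eq_card_roots, ← hl]; rfl
  let e : I ≃ Fin l.length := (Fintype.equivFinOfCardEq hlen.symm)
  refine ⟨fun i => l.get (e i), ?_⟩
  rw [e.prod_comp fun j => X - C (l.get j)]
  rw [← Finset.prod_map_val, Fin.univ_val_map]
  have := hs.eq_prod_roots_of_monic hQ
  rw [← hl] at this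
  conv_lhs => rw [this]
  have hlist : List.ofFn (fun j => X - C (l.get j)) = l.map (fun x => X - C x) :=
    List.ext_getElem (by simp) (by simp)
  rw [hlist]
  simp

/-! ### Recovering the field extension from a rational zero -/

/-- Suppose that the roots `ηᵢ` of `P` are indexed by the embeddings `i` of `E`, that the sums
`∑ᵢ i(w) η_{π i}` are pairwise distinct, and that `∑ᵢ i(w) ηᵢ` is in `k`. Then an automorphism `τ`
of `F` over `k` sends `ηᵢ` to `η_{τ i}`, because it fixes this last sum. Therefore `ηᵢ = i(x)` for a
single `x` in `E`, and this `x` generates `E`. -/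
lemma exists_generator {k E F : Type*} [Field k] [Field E] [Field F] [Algebra k E] [Algebra k F]
    [IsAlgClosure k F] [FiniteDimensional k E] [Algebra.IsSeparable k E]
    [Fintype (E →ₐ[k] F)] {P : k[X]} (hmon : P.Monic)
    (hdeg : P.natDegree = Module.finrank k E) {η : (E →ₐ[k] F) → F}
    (hP : P.map (algebraMap k F) = ∏ i, (X - C (η i))) {w : E}
    (hdist : Function.Injective fun π : Equiv.Perm (E →ₐ[k] F) => ∑ i, i w * η (π i))
    {z : k} (hz : algebraMap k F z = ∑ i, i w * η i) :
    Irreducible P ∧ ∃ x : E, aeval x P = 0 ∧ IntermediateField.adjoin k {x} = ⊤ := by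
  classical
  have hAc : IsAlgClosed F := IsAlgClosure.isAlgClosed k
  have hAalg : Algebra.IsAlgebraic k F := IsAlgClosure.isAlgebraic
  have hn : Normal k F :=
    normal_iff.2 fun x => ⟨(hAalg.isAlgebraic x).isIntegral, IsAlgClosed.splits _⟩
  -- if two roots coincided, the sums for `1` and for a transposition would be equal
  have hη : Function.Injective η := by
    intro i j hij
    by_contra hne
    have hswap : Equiv.swap i j = 1 := by
      apply hdist
      refine Finset.sum_congr rfl fun l _ => ?_
      congr 1
      rw [Equiv.Perm.one_apply]
      rcases eq_or_ne l i with rfl | h1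
      · rw [Equiv.swap_apply_left, hij]
      rcases eq_or_ne l j with rfl | h2
      · rw [Equiv.swap_apply_right, hij]
      rw [Equiv.swap_apply_of_ne_of_ne h1 h2]
    exact hne (Equiv.swap_eq_one_iff.1 hswap)
  have hroot : ∀ c : F, aeval c P = 0 ↔ ∃ i, η i = c := by
    intro c
    rw [aeval_def, eval₂_eq_eval_map, hP, eval_prod, Finset.prod_eq_zero_iff]
    simp [sub_eq_zero, eq_comm]
  -- Galois equivariance of the indexing of the roots
  have hequiv : ∀ (τ : F ≃ₐ[k] F) (i : E →ₐ[k] F), τ (η i) = η ((τ : F →ₐ[k] F).comp i) := by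
    intro τ
    have hex : ∀ i, ∃ j, η j = τ (η i) := by
      intro i
      rw [← hroot, aeval_algHom_apply τ, (hroot _).2 ⟨i, rfl⟩, map_zero]
    choose r hr using hex
    have hrinj : Function.Injective r := by
      intro i j hij
      apply hη
      apply τ.injective
      rw [← hr, ← hr, hij]
    let ρ : Equiv.Perm (E →ₐ[k] F) :=
      Equiv.ofBijective r (Finite.injective_iff_bijective.1 hrinj)
    have hsinj : Function.Injective fun i : E →ₐ[k] F => (τ : F →ₐ[k] F).comp i := by
      intro i j hij
      ext x
      exact τ.injective (DFunLike.congr_fun hij x)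
    let s : Equiv.Perm (E →ₐ[k] F) :=
      Equiv.ofBijective _ (Finite.injective_iff_bijective.1 hsinj)
    have hρs : ρ * s⁻¹ = 1 := by
      apply hdist
      have h1 := congrArg τ hz
      rw [AlgEquiv.commutes, map_sum] at h1
      have h2 : ∑ i, i w * η ((ρ * s⁻¹) i) = ∑ i, τ (i w * η i) := by
        refine (Fintype.sum_equiv s _ _ fun i => ?_).symm
        rw [map_mul, Equiv.Perm.mul_apply, show s⁻¹ (s i) = i from s.symm_apply_apply i]
        change _ = τ (i w) * η (r i)
        rw [hr]
      simp only [h2, ← h1, hz, Equiv.Perm.one_apply]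
    have hρ : ρ = s := mul_inv_eq_one.1 hρs
    intro i
    rw [← hr]
    exact congrArg η (DFunLike.congr_fun hρ i)
  obtain ⟨i₀⟩ : Nonempty (E →ₐ[k] F) := ⟨IsAlgClosed.lift⟩
  have hsepP : P.Separable := by
    rw [← separable_map (algebraMap k F), hP]
    exact separable_prod_X_sub_C_iff.2 hη
  have hsep : IsSeparable k (η i₀) :=
    hsepP.of_dvd (minpoly.dvd _ _ ((hroot _).2 ⟨i₀, rfl⟩))
  obtain ⟨x, hx⟩ : ∃ x, i₀ x = η i₀ := by
    let _ : Algebra E F := i₀.toRingHom.toAlgebra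
    have : IsScalarTower k E F := IsScalarTower.of_algebraMap_eq fun a => (i₀.commutes a).symm
    -- `i₀` makes `F` an `E`-algebra, and every automorphism over `E` fixes `η i₀`
    have hnE : Normal E F := Normal.tower_top_of_normal k E F
    have hbot : η i₀ ∈ (⊥ : IntermediateField E F) := by
      by_contra hnot
      obtain ⟨c', hne, hconj⟩ :=
        (notMem_iff_exists_ne_and_isConjRoot (hsep.tower_top E) (IsAlgClosed.splits _)).1 hnot
      obtain ⟨τ, hτ⟩ := isConjRoot_iff_exists_algEquiv.1 hconj.symm
      apply hne
      rw [← hτ]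
      have h1 := hequiv (τ.restrictScalars k) i₀
      have h2 : ((τ.restrictScalars k : F ≃ₐ[k] F) : F →ₐ[k] F).comp i₀ = i₀ := by
        ext e
        exact τ.commutes e
      rw [h2] at h1
      exact h1.symm
    exact IntermediateField.mem_bot.1 hbot
  have hxi : ∀ i : E →ₐ[k] F, i x = η i := by
    intro i
    obtain ⟨α, hα⟩ := Field.exists_primitive_element k E
    have hconj : IsConjRoot k (i α) (i₀ α) := by
      rw [IsConjRoot, minpoly.algHom_eq i i.injective, minpoly.algHom_eq i₀ i₀.injective]
    obtain ⟨τ, hτ⟩ := isConjRoot_iff_exists_algEquiv.1 hconj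
    have hτi : (τ : F →ₐ[k] F).comp i₀ = i :=
      (Field.primitive_element_iff_algHom_eq_of_eval' k F
        (fun _ => IsAlgClosed.splits _) α).1 hα hτ
    rw [← hτi, ← hequiv, ← hx]
    rfl
  have hadj : IntermediateField.adjoin k {x} = ⊤ := by
    rw [Field.primitive_element_iff_algHom_eq_of_eval' k F (fun _ => IsAlgClosed.splits _)]
    intro i j hij
    apply hη
    rw [← hxi, ← hxi]
    exact hij
  have hxP : aeval x P = 0 := by
    apply (map_eq_zero_iff i₀ i₀.injective).1
    rw [← aeval_algHom_apply, hroot]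
    exact ⟨i₀, hx.symm⟩
  have hint : IsIntegral k x := .of_finite k x
  refine ⟨?_, x, hxP, hadj⟩
  rw [eq_of_monic_of_dvd_of_natDegree_le (minpoly.monic hint) hmon (minpoly.dvd _ _ hxP)
    (by rw [hdeg, (Field.primitive_element_iff_minpoly_natDegree_eq k x).1 hadj])]
  exact minpoly.irreducible hint

universe u in
/-- The resolvent `R(t, Z)` of the pencil `p - tX` and of a generic `w` in `E` is irreducible over the
algebraic closure `F` of `k`. Away from the zeros of `δ`, the roots of the specialized resolvent are
the pairwise distinct sums `∑ᵢ i(w) η_{π i}` in the roots `ηᵢ` of the specialized pencil. -/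
lemma exists_geometric_resolvent {k E : Type*} {F Ω : Type u} {K : Type*} [Field k] [Infinite k]
    [Field E] [Algebra k E] [Algebra.IsSeparable k E]
    [Field F] [Algebra k F] [IsAlgClosure k F] [Field K] [Field Ω]
    [Algebra F[X] K] [IsFractionRing F[X] K] [Algebra F[X] Ω] [Algebra K Ω]
    [IsScalarTower F[X] K Ω] [IsAlgClosure K Ω] [Algebra F Ω] [IsScalarTower F F[X] Ω]
    [Fintype (E →ₐ[k] F)] [DecidableEq (E →ₐ[k] F)] {p g : k[X]} (hp : p.Monic) (hp0 : p.coeff 0 ≠ 0)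
    (hdeg : 3 ≤ p.natDegree) (hcard : p.natDegree = Fintype.card (E →ₐ[k] F))
    (hpg : p = (X - 1) ^ 2 * g) (hg : g.Separable) (hg1 : g.eval 1 ≠ 0) :
    ∃ (w : E) (R : k[X][X]) (δ : k[X]), R.Monic ∧
      Irreducible (R.map (mapRingHom (algebraMap k F))) ∧ δ ≠ 0 ∧
      ∀ (t : k) (η : (E →ₐ[k] F) → F), δ.eval t ≠ 0 →
        (p - C t * X).map (algebraMap k F) = ∏ i, (X - C (η i)) →
        Function.Injective (fun π : Equiv.Perm (E →ₐ[k] F) => ∑ i, i w * η (π i)) ∧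
        (R.map (evalRingHom t)).map (algebraMap k F) =
          ∏ π : Equiv.Perm (E →ₐ[k] F), (X - C (∑ i, i w * η (π i))) := by
  classical
  have hFc : IsAlgClosed F := IsAlgClosure.isAlgClosed k
  have hΩc : IsAlgClosed Ω := IsAlgClosure.isAlgClosed K
  have hinj : Function.Injective (algebraMap F[X] Ω) := by
    rw [IsScalarTower.algebraMap_eq F[X] K Ω]
    exact (algebraMap K Ω).injective.comp (IsFractionRing.injective F[X] K)
  let φ : k[X] →+* Ω := (algebraMap F[X] Ω).comp (mapRingHom (algebraMap k F))
  have hφinj : Function.Injective φ :=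
    hinj.comp (map_injective _ (algebraMap k F).injective)
  set T : Ω := algebraMap F[X] Ω X with hT
  have hTtr : Transcendental F T := transcendental_algebraMap_X hinj
  have hφC : φ.comp C = (algebraMap F Ω).comp (algebraMap k F) := by
    ext a
    simp only [φ, RingHom.comp_apply, coe_mapRingHom, map_C]
    rw [IsScalarTower.algebraMap_apply F F[X] Ω]
    rfl
  -- the generic member of the pencil
  let P : k[X][X] := p.map C - C X * X
  have hPφ : P.map φ = (p.map (algebraMap k F)).map (algebraMap F Ω) - C T * X := by
    simp only [P, Polynomial.map_sub, Polynomial.map_mul, map_C, map_X, map_map, hφC]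
    simp [φ, hT]
  have hPmon : (P.map φ).Monic := by
    rw [hPφ]
    apply ((hp.map _).map _).sub_of_left
    apply degree_lt_degree
    rw [natDegree_map, natDegree_map]
    exact ((natDegree_C_mul_le T X).trans_lt (by rw [natDegree_X]; omega : _ < 3)).trans_le hdeg
  have hPdeg : (P.map φ).natDegree = Fintype.card (E →ₐ[k] F) := by
    rw [hPφ, natDegree_sub_eq_left_of_natDegree_lt, natDegree_map, natDegree_map, hcard]
    rw [natDegree_map, natDegree_map]
    exact ((natDegree_C_mul_le T X).trans_lt (by rw [natDegree_X]; omega : _ < 3)).trans_le hdeg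
  have hp0F : (p.map (algebraMap k F)).coeff 0 ≠ 0 := by
    rw [coeff_map]
    simpa using hp0
  obtain ⟨y, hy⟩ := exists_eq_prod_X_sub_C hPmon (IsAlgClosed.splits _) hPdeg
  have hyinj : Function.Injective y := by
    rw [← separable_prod_X_sub_C_iff, ← hy, hPφ]
    exact pencil_separable hp0F hTtr
  have hyroot : ∀ c, aeval c (p.map (algebraMap k F)) = T * c ↔ c ∈ Set.range y := by
    intro c
    have h1 : (P.map φ).eval c = aeval c (p.map (algebraMap k F)) - T * c := by
      rw [hPφ, eval_sub, aeval_def, eval₂_eq_eval_map]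
      simp
    rw [← sub_eq_zero, ← h1, hy, eval_prod, Finset.prod_eq_zero_iff]
    simp [sub_eq_zero, eq_comm]
  obtain ⟨w, hw⟩ := exists_separating_element (algebraMap F Ω) hyinj
  have hsepw : ∀ i : E →ₐ[k] F, IsSeparable k (i w) := fun i =>
    (Algebra.IsSeparable.isSeparable k w).map i i.injective
  have hperm : ∀ τ : F ≃ₐ[k] F, ∃ e : Equiv.Perm (E →ₐ[k] F), ∀ i, τ (i w) = (e i) w := by
    intro τ
    have hsinj : Function.Injective fun i : E →ₐ[k] F => (τ : F →ₐ[k] F).comp i := by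
      intro i j hij
      ext x
      exact τ.injective (DFunLike.congr_fun hij x)
    exact ⟨Equiv.ofBijective _ (Finite.injective_iff_bijective.1 hsinj), fun i => rfl⟩
  obtain ⟨R, hR⟩ := exists_resolvent (fun i : E →ₐ[k] F => i w) hsepw hperm P
  have hRφ := hR Ω φ y hφC hy
  have hRmon : R.Monic := by
    rw [hφinj.monic_map_iff, hRφ]
    exact monic_prod_of_monic _ _ fun _ _ => monic_X_sub_C _
  have hRsep : (R.map φ).Separable := by
    rw [hRφ]
    exact separable_prod_X_sub_C_iff.2 hw
  obtain ⟨δ, hδ, hδsep⟩ := exists_discriminant hφinj hRsep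
  refine ⟨w, R, δ, hRmon, ?_, hδ, ?_⟩
  · refine irreducible_of_conjugate_roots (K := K) (Ω := Ω) hw ?_ ?_
    · intro π ρ
      obtain ⟨σ, hσ⟩ := pencil_symmetric (K := K) (hp.map (algebraMap k F)) hp0F
        (by rw [natDegree_map]; exact hdeg)
        (g := g.map (algebraMap k F))
        (by rw [hpg]; simp) (hg.map) (by
          rw [eval_one_map]
          simpa using hg1) hyinj hyroot (ρ * π⁻¹)
      refine ⟨σ, ?_⟩
      rw [map_sum]
      refine Finset.sum_congr rfl fun i _ => ?_
      rw [map_mul, hσ, IsScalarTower.algebraMap_apply F F[X] Ω,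
        IsScalarTower.algebraMap_apply F[X] K Ω, AlgEquiv.commutes]
      simp
    · rw [map_map]
      exact hRφ
  · intro t η ht hη
    let ψ : k[X] →+* F := (algebraMap k F).comp (evalRingHom t)
    have h1 : R.map ψ = ∏ π : Equiv.Perm (E →ₐ[k] F), (X - C (∑ i, i w * η (π i))) := by
      refine hR F ψ η ?_ ?_
      · ext a
        simp [ψ]
      · rw [← hη]
        have hψC : ψ.comp C = algebraMap k F := by
          ext a
          simp [ψ]
        simp only [P, Polynomial.map_sub, Polynomial.map_mul, map_C, map_X, map_map, hψC]
        simp [ψ]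
    refine ⟨?_, ?_⟩
    · rw [← separable_prod_X_sub_C_iff, ← h1]
      exact hδsep ψ (by simpa [ψ] using ht)
    · rw [map_map]
      exact h1

theorem stmt_3 (k E : Type*) [Field k] [Field E] [Algebra k E]
    [Algebra.IsSeparable k E]
    (hPAC : IsPAC k) (n : ℕ) (hn : 4 ≤ n)
    (hdeg : Module.finrank k E = n) :
    ∃ a b c d : k,
      Irreducible (X ^ n + C a * X ^ 3 + C b * X ^ 2 + C c * X + C d) ∧
      ∃ x : E, Polynomial.aeval x (X ^ n + C a * X ^ 3 + C b * X ^ 2 + C c * X + C d) = 0 ∧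
        IntermediateField.adjoin k {x} = ⊤ := by
  classical
  have hinf : Infinite k := hPAC.infinite
  have hfd : FiniteDimensional k E := Module.finite_of_finrank_pos (by omega)
  let F := AlgebraicClosure k
  let K := FractionRing F[X]
  let Ω := AlgebraicClosure K
  obtain ⟨a, b, c, d, g, hpg, hg, hg1, hd⟩ := exists_double_root_poly k n
  have hmonic : ∀ c : k, (X ^ n + C a * X ^ 3 + C b * X ^ 2 + C c * X + C d).Monic ∧
      (X ^ n + C a * X ^ 3 + C b * X ^ 2 + C c * X + C d).natDegree = n := by
    intro c
    have h3 : (C a * X ^ 3 + C b * X ^ 2 + C c * X + C d).natDegree < n :=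
      natDegree_cubic_le.trans_lt (by omega)
    have h4 : X ^ n + C a * X ^ 3 + C b * X ^ 2 + C c * X + C d =
      X ^ n + (C a * X ^ 3 + C b * X ^ 2 + C c * X + C d) := by ring
    rw [h4]
    have h5 : (X ^ n : k[X]).natDegree = n := natDegree_X_pow n
    constructor
    · apply (monic_X_pow n).add_of_left
      exact degree_lt_degree (by rw [h5]; exact h3)
    · rw [natDegree_add_eq_left_of_natDegree_lt (by rw [h5]; exact h3), h5]
  have hI : Fintype.card (E →ₐ[k] F) = n := by rw [AlgHom.card, hdeg]
  obtain ⟨w, R, δ, hRmon, hRirr, hδ, hRt⟩ := exists_geometric_resolvent (E := E) (F := F) (Ω := Ω)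
    (K := K) (hmonic c).1 (by simp [coeff_X_pow, show 0 ≠ n by omega]; exact hd)
    (by rw [(hmonic c).2]; omega) ((hmonic c).2.trans hI.symm) hpg hg hg1
  obtain ⟨t, z, ht, hz⟩ := hPAC.exists_zero hRmon hRirr hδ
  have hshift : X ^ n + C a * X ^ 3 + C b * X ^ 2 + C c * X + C d - C t * X =
      X ^ n + C a * X ^ 3 + C b * X ^ 2 + C (c - t) * X + C d := by
    rw [C_sub]; ring
  have hRt := hRt t
  rw [hshift] at hRt
  refine ⟨a, b, c - t, d, ?_⟩
  obtain ⟨hm, hm'⟩ := hmonic (c - t)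
  obtain ⟨η, hη⟩ := exists_eq_prod_X_sub_C (I := E →ₐ[k] F) (hm.map (algebraMap k F))
    (IsAlgClosed.splits _) (by rw [natDegree_map, hm', hI])
  obtain ⟨hdist, hprod⟩ := hRt η ht hη
  -- the rational zero `z` selects an indexing of the roots by the embeddings of `E`
  obtain ⟨π, hπ⟩ : ∃ π : Equiv.Perm (E →ₐ[k] F), algebraMap k F z = ∑ i, i w * η (π i) := by
    have h1 : ((R.map (evalRingHom t)).map (algebraMap k F)).eval (algebraMap k F z) = 0 := by
      rw [eval_map_algebraMap, aeval_algebraMap_apply, coe_aeval_eq_eval, hz, map_zero]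
    rw [hprod, eval_prod, Finset.prod_eq_zero_iff] at h1
    obtain ⟨π, -, hπ⟩ := h1
    rw [eval_sub, eval_X, eval_C, sub_eq_zero] at hπ
    exact ⟨π, hπ⟩
  refine exists_generator (η := η ∘ π) hm (hm'.trans hdeg.symm) ?_ ?_ hπ
  · rw [hη]
    exact (Equiv.prod_comp π fun i => X - C (η i)).symm
  · intro ρ₁ ρ₂ h
    exact mul_left_cancel (hdist (a₁ := π * ρ₁) (a₂ := π * ρ₂) h)
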